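/- arXiv:1105.0510 — 2 statements merged into one kernel-verified Lean document; each statement's English description precedes it below -/
import Mathlib

section
/- (Proposition 1.) The function D : ℝ → ℝ defined by D(t₂) = σ₂·φ((μ−t₂)/σ₂)·F₁ − σ₁·f₁·Φ((μ−t₂)/σ₂) attains a strict global maximum at the unique point t₂⁺ = μ + σ₁·f₁/F₁; that is, D(t₂) < D(t₂⁺) for all t₂ ≠ t₂⁺. -/
open Real

/-- Density of the standard normal distribution. -/
noncomputable def stdPdf (y : ℝ) : ℝ := (Real.sqrt (2 * Real.pi))⁻¹ * Real.exp (-(y ^ 2) / 2)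

/-- Cumulative distribution function of the standard normal distribution. -/
noncomputable def stdCdf (y : ℝ) : ℝ := ∫ x in Set.Iic y, stdPdf x

theorem stdPdf_pos (y : ℝ) : 0 < stdPdf y := by
  unfold stdPdf; positivity

theorem stdPdf_cont : Continuous stdPdf := by
  unfold stdPdf; fun_prop

theorem stdPdf_int : MeasureTheory.Integrable stdPdf := by
  have h := (integrable_exp_neg_mul_sq (b := 1/2) (by norm_num)).const_mul
    (Real.sqrt (2 * Real.pi))⁻¹
  refine h.congr (Filter.Eventually.of_forall fun x => ?_)
  simp only [stdPdf]
  congr 2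
  ring

theorem stdPdf_deriv (y : ℝ) : HasDerivAt stdPdf (-y * stdPdf y) y := by
  have h : HasDerivAt (fun y : ℝ => -(y ^ 2) / 2) (-y) y := by
    have := ((hasDerivAt_pow 2 y).neg).div_const 2
    refine HasDerivAt.congr_deriv this ?_
    simp
    ring
  have := (h.exp).const_mul (Real.sqrt (2 * Real.pi))⁻¹
  refine HasDerivAt.congr_deriv this ?_
  unfold stdPdf
  ring

theorem stdCdf_deriv (y : ℝ) : HasDerivAt stdCdf (stdPdf y) y := by
  have h : HasDerivAt (fun u => ∫ x in (0:ℝ)..u, stdPdf x) (stdPdf y) y :=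
    intervalIntegral.integral_hasDerivAt_right (stdPdf_cont.intervalIntegrable _ _)
      (stdPdf_cont.stronglyMeasurableAtFilter _ _) stdPdf_cont.continuousAt
  have e : stdCdf = fun u => (∫ x in (0:ℝ)..u, stdPdf x) + stdCdf 0 := by
    funext u
    have := intervalIntegral.integral_Iic_sub_Iic (a := 0) (b := u)
      stdPdf_int.integrableOn stdPdf_int.integrableOn
    unfold stdCdf
    linarith
  rw [e]
  exact h.add_const _

theorem stdCdf_pos (y : ℝ) : 0 < stdCdf y := by
  unfold stdCdf
  rw [MeasureTheory.setIntegral_pos_iff_support_of_nonneg_ae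
    (Filter.Eventually.of_forall fun x => (stdPdf_pos x).le) stdPdf_int.integrableOn]
  have : Function.support stdPdf = Set.univ := by
    ext x; simp [(stdPdf_pos x).ne']
  rw [this]
  simp

theorem aux_max (a c z : ℝ) (ha : 0 < a) (hz : z ≠ -c / a) :
    a * stdPdf z - c * stdCdf z < a * stdPdf (-c / a) - c * stdCdf (-c / a) := by
  have hd : ∀ y, HasDerivAt (fun z => a * stdPdf z - c * stdCdf z)
      (stdPdf y * (-c - y * a)) y := by
    intro y
    have := ((stdPdf_deriv y).const_mul a).sub ((stdCdf_deriv y).const_mul c)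
    refine HasDerivAt.congr_deriv this ?_
    ring
  have hc : Continuous (fun z => a * stdPdf z - c * stdCdf z) :=
    continuous_iff_continuousAt.2 fun y => (hd y).continuousAt
  rcases lt_or_gt_of_ne hz with h | h
  · have := strictMonoOn_of_deriv_pos (convex_Iic (-c / a)) hc.continuousOn (by
      intro x hx
      rw [interior_Iic, Set.mem_Iio, lt_div_iff₀ ha] at hx
      rw [(hd x).deriv]
      exact mul_pos (stdPdf_pos x) (by linarith))
    exact this (Set.mem_Iic.2 h.le) (Set.mem_Iic.2 le_rfl) h
  · have := strictAntiOn_of_deriv_neg (convex_Ici (-c / a)) hc.continuousOn (by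
      intro x hx
      rw [interior_Ici, Set.mem_Ioi, div_lt_iff₀ ha] at hx
      rw [(hd x).deriv]
      exact mul_neg_of_pos_of_neg (stdPdf_pos x) (by linarith))
    exact this (Set.mem_Ici.2 le_rfl) (Set.mem_Ici.2 h.le) h

/-- Proposition 1: under the unanimous acceptance group rule, the expected advantage
`D(t₂) = σ₂·φ((μ−t₂)/σ₂)·F₁ − σ₁·f₁·Φ((μ−t₂)/σ₂)` of a Group 2 member over a Group 1
member attains a strict global maximum at the unique point `t₂⁺ = μ + σ₁·f₁/F₁`. -/
theorem advantage_max_unanimous_acceptance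
    (μ σ : ℝ) (hσ : 0 < σ) (g₁ g₂ : ℕ) (hg₁ : 1 ≤ g₁) (hg₂ : 1 ≤ g₂) (t₁ : ℝ)
    (σ₁ σ₂ : ℝ) (hσ₁ : σ₁ = σ / Real.sqrt g₁) (hσ₂ : σ₂ = σ / Real.sqrt g₂)
    (F₁ f₁ : ℝ) (hF₁ : F₁ = stdCdf ((μ - t₁) / σ₁)) (hf₁ : f₁ = stdPdf ((μ - t₁) / σ₁))
    (D : ℝ → ℝ)
    (hD : D = fun t₂ => σ₂ * stdPdf ((μ - t₂) / σ₂) * F₁ - σ₁ * f₁ * stdCdf ((μ - t₂) / σ₂)) :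
    ∀ t₂ : ℝ, t₂ ≠ μ + σ₁ * f₁ / F₁ → D t₂ < D (μ + σ₁ * f₁ / F₁) := by
  intro t ht
  have hF : 0 < F₁ := hF₁ ▸ stdCdf_pos _
  have hs : 0 < σ₂ := by
    have : (0:ℝ) < g₂ := by exact_mod_cast hg₂
    rw [hσ₂]; positivity
  have e : (μ - (μ + σ₁ * f₁ / F₁)) / σ₂ = -(σ₁ * f₁) / (σ₂ * F₁) := by
    field_simp
    ring
  have key := aux_max (σ₂ * F₁) (σ₁ * f₁) ((μ - t) / σ₂) (by positivity) (by
    rw [← e]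
    intro h
    apply ht
    have := (div_left_inj' hs.ne').1 h
    linarith)
  rw [← e] at key
  subst hD
  simp only
  linarith
end

section
/- The equation y = φ(y)/Φ(y) has exactly one real solution y₀, and this solution satisfies 0.5 < y₀ < 0.51. -/
open Real

noncomputable def auxH (y : ℝ) : ℝ :=
  Real.sqrt (2 * Real.pi) / 2 + ∫ x in (0:ℝ)..y, Real.exp (-(x ^ 2) / 2)

lemma aux_cont : Continuous fun x : ℝ => Real.exp (-(x ^ 2) / 2) := by fun_prop

lemma aux_integrable : MeasureTheory.Integrable fun x : ℝ => Real.exp (-(x ^ 2) / 2) := by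
  have h := integrable_exp_neg_mul_sq (b := 1/2) (by norm_num)
  refine h.congr (Filter.Eventually.of_forall fun x => ?_)
  simp only
  congr 1
  ring

lemma aux_Iic : ∫ x in Set.Iic (0:ℝ), Real.exp (-(x ^ 2) / 2) = Real.sqrt (2 * Real.pi) / 2 := by
  have h := integral_gaussian_Ioi (1/2)
  have h2 := integral_comp_neg_Iic (0:ℝ) (fun x : ℝ => Real.exp (-(x ^ 2) / 2))
  simp only [neg_sq, neg_zero] at h2
  rw [h2]
  have e : Real.pi / (1/2) = 2 * Real.pi := by ring
  rw [e] at h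
  rw [← h]
  congr 1
  ext x
  congr 1
  ring

lemma aux_cdf (y : ℝ) : stdCdf y = (Real.sqrt (2 * Real.pi))⁻¹ * auxH y := by
  unfold stdCdf stdPdf auxH
  rw [MeasureTheory.integral_const_mul, ← aux_Iic,
    ← intervalIntegral.integral_Iic_sub_Iic aux_integrable.integrableOn
      aux_integrable.integrableOn]
  ring

lemma aux_c : 0 < (Real.sqrt (2 * Real.pi))⁻¹ := by positivity

lemma aux_quot (y : ℝ) : stdPdf y / stdCdf y = Real.exp (-(y ^ 2) / 2) / auxH y := by
  rw [aux_cdf]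
  unfold stdPdf
  exact mul_div_mul_left _ _ aux_c.ne'

lemma aux_mono : StrictMono auxH := by
  intro a b hab
  have h := intervalIntegral.intervalIntegral_pos_of_pos
    (f := fun x : ℝ => Real.exp (-(x ^ 2) / 2)) (a := a) (b := b)
    (aux_cont.intervalIntegrable _ _) (fun x => Real.exp_pos _) hab
  have h2 := intervalIntegral.integral_add_adjacent_intervals
    (aux_cont.intervalIntegrable (μ := MeasureTheory.volume) 0 a)
    (aux_cont.intervalIntegrable a b)
  unfold auxH
  linarith

lemma aux_zero : 0 < auxH 0 := by
  unfold auxH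
  simp only [intervalIntegral.integral_same, add_zero]
  positivity

lemma aux_nonneg (y : ℝ) : 0 ≤ stdCdf y := by
  unfold stdCdf stdPdf
  exact MeasureTheory.integral_nonneg fun x => by positivity

lemma aux_H_cont : Continuous auxH := by
  unfold auxH
  exact continuous_const.add
    (intervalIntegral.continuous_primitive (fun a b => aux_cont.intervalIntegrable a b) 0)

noncomputable def auxG (y : ℝ) : ℝ := y * auxH y - Real.exp (-(y ^ 2) / 2)

lemma aux_H_pos {y : ℝ} (hy : 0 ≤ y) : 0 < auxH y :=
  aux_zero.trans_le (aux_mono.monotone hy)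

lemma aux_iff (y : ℝ) : y = stdPdf y / stdCdf y ↔ 0 ≤ y ∧ auxG y = 0 := by
  constructor
  · intro h
    have hy : 0 ≤ y := by
      rw [h]
      exact div_nonneg (by unfold stdPdf; positivity) (aux_nonneg y)
    refine ⟨hy, ?_⟩
    rw [aux_quot, eq_div_iff (aux_H_pos hy).ne'] at h
    unfold auxG
    linarith
  · rintro ⟨hy, h⟩
    rw [aux_quot, eq_div_iff (aux_H_pos hy).ne']
    unfold auxG at h
    linarith

lemma aux_G_mono : StrictMonoOn auxG (Set.Ici 0) := by
  intro a ha b hb hab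
  simp only [Set.mem_Ici] at ha hb
  have h1 : a * auxH a < b * auxH b :=
    mul_lt_mul'' hab (aux_mono hab) ha (aux_H_pos ha).le
  have h2 : Real.exp (-(b ^ 2) / 2) ≤ Real.exp (-(a ^ 2) / 2) := by
    apply Real.exp_le_exp.2
    nlinarith
  unfold auxG
  linarith

lemma aux_lo : auxG 0.5 < 0 := by
  have h1 : ∫ x in (0:ℝ)..0.5, Real.exp (-(x ^ 2) / 2) ≤ ∫ x in (0:ℝ)..0.5, (1:ℝ) := by
    apply intervalIntegral.integral_mono (by norm_num) (aux_cont.intervalIntegrable _ _)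
      (by simp)
    intro x
    simp only [Real.exp_le_one_iff]
    nlinarith [sq_nonneg x]
  have h2 : Real.sqrt (2 * Real.pi) ≤ 2.507 := by
    rw [Real.sqrt_le_left (by norm_num)]
    nlinarith [Real.pi_lt_d4]
  have h3 : (15/16:ℝ)^2 ≤ Real.exp (-((0.5:ℝ) ^ 2) / 2) := by
    have e : Real.exp (-((0.5:ℝ) ^ 2) / 2) = Real.exp (-(1/16)) ^ 2 := by
      rw [← Real.exp_nat_mul]; norm_num
    rw [e]
    have := Real.add_one_le_exp (-(1/16:ℝ))
    exact pow_le_pow_left₀ (by norm_num) (by linarith) 2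
  simp only [intervalIntegral.integral_const, smul_eq_mul] at h1
  unfold auxG auxH
  norm_num at *
  linarith

lemma aux_hi : 0 < auxG 0.51 := by
  have h1 : ∫ x in (0:ℝ)..0.51, (1 - x ^ 2 / 2) ≤
      ∫ x in (0:ℝ)..0.51, Real.exp (-(x ^ 2) / 2) := by
    apply intervalIntegral.integral_mono (by norm_num)
      (Continuous.intervalIntegrable (by fun_prop) _ _) (aux_cont.intervalIntegrable _ _)
    intro x
    have := Real.add_one_le_exp (-(x ^ 2) / 2)
    simp only
    linarith
  have h0 : ∫ x in (0:ℝ)..0.51, (1 - x ^ 2 / 2) = 0.51 - 0.51 ^ 3 / 6 := by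
    rw [intervalIntegral.integral_sub (by simp)
      (Continuous.intervalIntegrable (by fun_prop) _ _), intervalIntegral.integral_div,
      integral_pow]
    norm_num
  rw [h0] at h1
  have h2 : 2.506 ≤ Real.sqrt (2 * Real.pi) := by
    apply Real.le_sqrt_of_sq_le
    nlinarith [Real.pi_gt_d4]
  have h3 : Real.exp (-((0.51:ℝ) ^ 2) / 2) ≤ 0.885 := by
    rw [neg_div, Real.exp_neg]
    have := Real.add_one_le_exp ((0.51:ℝ) ^ 2 / 2)
    rw [inv_le_comm₀ (Real.exp_pos _) (by norm_num)]
    refine le_trans ?_ this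
    norm_num
  unfold auxG auxH
  norm_num at *
  linarith

/-- The equation `y = φ(y)/Φ(y)` has exactly one real solution, and this solution lies
strictly between `0.5` and `0.51`. -/
theorem unique_solution_of_inverse_mills_fixed_point :
    (∃! y : ℝ, y = stdPdf y / stdCdf y) ∧
    ∀ y : ℝ, y = stdPdf y / stdCdf y → 0.5 < y ∧ y < 0.51 := by
  have hc : Continuous auxG := by
    unfold auxG
    exact (continuous_id.mul aux_H_cont).sub aux_cont
  constructor
  · obtain ⟨y, hy, hy0⟩ := intermediate_value_Icc (a := (0.5:ℝ)) (b := 0.51) (by norm_num)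
      hc.continuousOn ⟨aux_lo.le, aux_hi.le⟩
    have hyn : 0 ≤ y := le_trans (by norm_num) hy.1
    refine ⟨y, (aux_iff y).2 ⟨hyn, hy0⟩, fun z hz => ?_⟩
    obtain ⟨hz1, hz2⟩ := (aux_iff z).1 hz
    exact aux_G_mono.injOn hz1 hyn (hz2.trans hy0.symm)
  · intro y h
    obtain ⟨h1, h2⟩ := (aux_iff y).1 h
    constructor
    · apply (aux_G_mono.lt_iff_lt (a := (0.5:ℝ)) (by simp only [Set.mem_Ici]; norm_num) h1).1
      rw [h2]; exact aux_lo
    · apply (aux_G_mono.lt_iff_lt (b := (0.51:ℝ)) h1 (by simp only [Set.mem_Ici]; norm_num)).1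
      rw [h2]; exact aux_hi
end
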